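/- (Parabolic invariance) Let λ ∈ Λ_I⁺ and β ∈ Ψ_λ⁺ (note Φ_I ⊆ Φ_{β,1}). Then there exists μ ∈ Λ_I⁺ with sgn(s_βλ, μ) ≠ 0 if and only if there exists μ' ∈ Λ⁺(Φ_I, Φ_{β,1}) with sgn(s_β(λ|_{Φ_{β,1}}), μ', Φ_I, Φ_{β,1}) ≠ 0. In particular, if sgn(s_βλ, μ) ≠ 0, then μ' = μ|_{Φ_{β,1}} and c(λ,μ) = c(λ|_{Φ_{β,1}}, μ|_{Φ_{β,1}}, Φ_I, Φ_{β,1}). -/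

import Mathlib

open scoped RealInnerProductSpace
open Classical

noncomputable section

namespace JantzenGVM

variable {V : Type*} [NormedAddCommGroup V] [InnerProductSpace ℝ V] [FiniteDimensional ℝ V]

/-- The coroot `α^∨ = 2α/⟨α,α⟩` of a vector `α` (junk value `0` when `α = 0`). -/
def coroot (α : V) : V := (2 / ⟪α, α⟫) • α

/-- The linear functional `v ↦ ⟨v, α^∨⟩`. -/
def corootForm (α : V) : V →ₗ[ℝ] ℝ where
  toFun v := ⟪v, coroot α⟫
  map_add' x y := by simp [inner_add_left]
  map_smul' c x := by simp [inner_smul_left]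

lemma corootForm_self {α : V} (h : ⟪α, α⟫ ≠ 0) : corootForm α α = 2 := by
  simp only [corootForm, coroot, LinearMap.coe_mk, AddHom.coe_mk, real_inner_smul_right]
  field_simp

/-- The reflection `s_α` as a linear automorphism of `V` (the identity when `⟨α,α⟩ = 0`). -/
def reflV (α : V) : V ≃ₗ[ℝ] V :=
  if h : ⟪α, α⟫ = 0 then LinearEquiv.refl ℝ V
  else Module.reflection (corootForm_self h)

/-- `h* = ℂ ⊗ V`, realized as the space of real-linear functionals `V → ℂ` via the
inner product; an element `λ` pairs with a root `α` by `⟨λ, α⟩ = λ α` and with the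
coroot by `⟨λ, α^∨⟩ = λ (coroot α)`. -/
abbrev HStar (V : Type*) [NormedAddCommGroup V] [InnerProductSpace ℝ V] := V →ₗ[ℝ] ℂ

/-- The canonical embedding of `V` into `h*`. -/
def emb (α : V) : HStar V where
  toFun v := (⟪α, v⟫ : ℂ)
  map_add' x y := by simp [inner_add_right]
  map_smul' c x := by simp [inner_smul_right, Complex.real_smul]

/-- The action of a linear automorphism `w` of `V` on `h*`: `(w • λ)(v) = λ(w⁻¹ v)`. -/
def wAct (w : V ≃ₗ[ℝ] V) (l : HStar V) : HStar V := l ∘ₗ (w.symm : V →ₗ[ℝ] V)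

/-- The reflection `s_β λ = λ - ⟨λ, β^∨⟩ β` acting on `h*`. -/
def sRefl (β : V) (l : HStar V) : HStar V := l - l (coroot β) • emb β

/-- The group generated by the reflections in the elements of `Φ'`. -/
def weyl (Φ' : Set V) : Subgroup (V ≃ₗ[ℝ] V) :=
  Subgroup.closure {w | ∃ α ∈ Φ', w = reflV α}

/-- A finite, reduced, crystallographic root system spanning the Euclidean space `V`,
together with a choice of positive system and the corresponding simple system. -/
structure RootSys (V : Type*) [NormedAddCommGroup V] [InnerProductSpace ℝ V]
    [FiniteDimensional ℝ V] where
  Φ : Finset V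
  pos : Finset V
  Δ : Finset V
  ne_zero : ∀ α ∈ Φ, α ≠ (0 : V)
  span_eq_top : Submodule.span ℝ (Φ : Set V) = ⊤
  reduced : ∀ α ∈ Φ, ∀ c : ℝ, c • α ∈ Φ → c = 1 ∨ c = -1
  refl_mem : ∀ α ∈ Φ, ∀ β ∈ Φ, reflV α β ∈ Φ
  crystallographic : ∀ α ∈ Φ, ∀ β ∈ Φ, ∃ n : ℤ, ⟪β, coroot α⟫ = (n : ℝ)
  pos_subset : pos ⊆ Φ
  mem_pos_or : ∀ α ∈ Φ, α ∈ pos ∨ -α ∈ pos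
  not_both : ∀ α ∈ pos, -α ∉ pos
  simple_subset : Δ ⊆ pos
  simple_indep : LinearIndependent ℝ (fun x : {a : V // a ∈ Δ} => x.1)
  simple_gen : ∀ β ∈ pos, ∃ c : V → ℝ, (∀ α ∈ Δ, 0 ≤ c α) ∧ β = ∑ α ∈ Δ, c α • α

/-- A subsystem of the root system: a subset of `Φ` closed under its own reflections. -/
def IsSubsystem (S : RootSys V) (Φ' : Set V) : Prop :=
  Φ' ⊆ (S.Φ : Set V) ∧ ∀ α ∈ Φ', ∀ β ∈ Φ', reflV α β ∈ Φ'

/-- The length of `w`, i.e. the number of positive roots sent to negative roots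
(this equals the Coxeter length for elements of the Weyl group). -/
def len (S : RootSys V) (w : V ≃ₗ[ℝ] V) : ℕ :=
  {β ∈ (S.pos : Set V) | w β ∉ (S.pos : Set V)}.ncard

/-- `Φ_I = ℤI ∩ Φ`, the subsystem generated by a subset `I` of the simple roots. -/
def PhiI (S : RootSys V) (I : Finset V) : Set V :=
  {α ∈ (S.Φ : Set V) | α ∈ Submodule.span ℤ (I : Set V)}

/-- `z` is a positive integer. -/
def IsPosInt (z : ℂ) : Prop := ∃ n : ℤ, 0 < n ∧ z = (n : ℂ)

/-- `z` is an integer. -/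
def IsInt (z : ℂ) : Prop := ∃ n : ℤ, z = (n : ℂ)

/-- `Λ_I⁺ = {λ ∈ h* : ⟨λ, α^∨⟩ ∈ ℤ_{>0} for all α ∈ I}`. -/
def LambdaP (I : Set V) : Set (HStar V) :=
  {l | ∀ α ∈ I, IsPosInt (l (coroot α))}

/-- `Λ⁺(Φ'', Φ') = {ν ∈ ℂΦ' : ⟨ν, α^∨⟩ ∈ ℤ_{>0} for all α ∈ Φ'' ∩ Φ⁺}`. -/
def LambdaPSub (S : RootSys V) (Φ'' Φ' : Set V) : Set (HStar V) :=
  {l | l ∈ Submodule.span ℂ (emb '' Φ') ∧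
       ∀ α ∈ Φ'' ∩ (S.pos : Set V), IsPosInt (l (coroot α))}

/-- `λ` is `Φ''`-regular: `⟨λ, α⟩ ≠ 0` for all `α ∈ Φ''`. -/
def IsRegularOn (Φ'' : Set V) (l : HStar V) : Prop := ∀ α ∈ Φ'', l α ≠ 0

/-- `Ψ⁺(λ, Φ'', Φ') = {β ∈ (Φ' ∩ Φ⁺) \ Φ'' : ⟨λ, β^∨⟩ ∈ ℤ_{>0}}`. -/
def PsiP (S : RootSys V) (Φ'' Φ' : Set V) (l : HStar V) : Set V :=
  {β | β ∈ Φ' ∩ (S.pos : Set V) ∧ β ∉ Φ'' ∧ IsPosInt (l (coroot β))}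

/-- `Ψ⁺⁺(λ, Φ'', Φ') = {β ∈ Ψ⁺(λ, Φ'', Φ') : s_β λ is Φ''-regular}`. -/
def PsiPP (S : RootSys V) (Φ'' Φ' : Set V) (l : HStar V) : Set V :=
  {β ∈ PsiP S Φ'' Φ' l | ∀ α ∈ Φ'', (sRefl β l) α ≠ 0}

/-- The sign function: `sgn(λ, μ) = (-1)^{ℓ(w)}` if `λ, μ` are `Φ''`-regular and
`μ = wλ` for some `w ∈ W(Φ'')`, and `0` otherwise. -/
def sgnW (S : RootSys V) (Φ'' : Set V) (l m : HStar V) : ℤ :=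
  if h : IsRegularOn Φ'' l ∧ IsRegularOn Φ'' m ∧ ∃ w, w ∈ weyl Φ'' ∧ m = wAct w l
  then (-1) ^ len S h.2.2.choose else 0

/-- The Jantzen coefficient `c(λ, μ, Φ'', Φ') = Σ_{β ∈ Ψ⁺⁺(λ,Φ'',Φ')} sgn(s_β λ, μ)`. -/
def jc (S : RootSys V) (Φ'' Φ' : Set V) (l m : HStar V) : ℤ :=
  ∑ᶠ β ∈ PsiPP S Φ'' Φ' l, sgnW S Φ'' (sRefl β l) m

/-- The symmetrized Jantzen coefficient `c̃(λ, μ, Φ'', Φ')`. -/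
def jcSym (S : RootSys V) (Φ'' Φ' : Set V) (l m : HStar V) : ℤ :=
  jc S Φ'' Φ' l m + jc S Φ'' Φ' m l

/-- `θ(λ) = Σ_{w ∈ W_I} (-1)^{ℓ(w)} e^{wλ}` in the free `ℤ`-module on `h*`. -/
def theta (S : RootSys V) (I : Finset V) (l : HStar V) : HStar V →₀ ℤ :=
  ∑ᶠ w ∈ (weyl (PhiI S I) : Set (V ≃ₗ[ℝ] V)),
    Finsupp.single (wAct w l) ((-1) ^ len S w)

/-- `Φ_λ = {α ∈ Φ : ⟨λ, α⟩ = 0}`. -/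
def singSet (S : RootSys V) (l : HStar V) : Set V :=
  {α ∈ (S.Φ : Set V) | l α = 0}

/-- `Φ_{[λ]} = {α ∈ Φ : ⟨λ, α^∨⟩ ∈ ℤ}`. -/
def integralSet (S : RootSys V) (l : HStar V) : Set V :=
  {α ∈ (S.Φ : Set V) | IsInt (l (coroot α))}

/-- `(ℚ A) ∩ Φ`, the intersection of the rational span of `A` with `Φ`.
Taking `A = Φ_I ∪ {β}` gives `Φ_{β,1}`; taking `A = Φ_λ ∪ {β}` gives `Φ_{β,2}`. -/
def ratSpanRoots (S : RootSys V) (A : Set V) : Set V :=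
  {γ ∈ (S.Φ : Set V) | ∃ (t : Finset V) (c : V → ℚ),
    (t : Set V) ⊆ A ∧ γ = ∑ α ∈ t, (c α : ℝ) • α}

/-- `Φ_{β,0}`, the irreducible component of `Φ` containing `β`. -/
def component (S : RootSys V) (β : V) : Set V :=
  {γ ∈ (S.Φ : Set V) |
    Relation.ReflTransGen
      (fun x y => x ∈ (S.Φ : Set V) ∧ y ∈ (S.Φ : Set V) ∧ ⟪x, y⟫ ≠ 0) β γ}

/-- `λ|_{Φ'}`: the unique element of `ℂΦ'` with `⟨λ|_{Φ'}, α^∨⟩ = ⟨λ, α^∨⟩`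
for all `α ∈ Φ'`. -/
def restrictW (Φ' : Set V) (l : HStar V) : HStar V :=
  letI : Nonempty (HStar V) := ⟨0⟩
  Classical.epsilon fun m =>
    m ∈ Submodule.span ℂ (emb '' Φ') ∧ ∀ α ∈ Φ', m (coroot α) = l (coroot α)

/-- `ᴵWᴶ = {w ∈ W : ℓ(uwv) = ℓ(u) + ℓ(w) + ℓ(v) for all u ∈ W_I, v ∈ W_J}`. -/
def doubleCoset (S : RootSys V) (I J : Finset V) : Set (V ≃ₗ[ℝ] V) :=
  {w | w ∈ weyl (S.Φ : Set V) ∧ ∀ u ∈ weyl (PhiI S I), ∀ v ∈ weyl (PhiI S J),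
    len S (u * w * v) = len S u + len S w + len S v}

/-- The fundamental weight `ϖ_j` relative to an enumeration `e` of the simple roots:
the unique element of `h*` with `⟨ϖ_j, α_k^∨⟩ = δ_{jk}`. -/
def fundWeight {n : ℕ} (e : Fin n → V) (j : Fin n) : HStar V :=
  letI : Nonempty (HStar V) := ⟨0⟩
  Classical.epsilon fun m => ∀ k : Fin n, m (coroot (e k)) = if k = j then 1 else 0

/-- The labels of the irreducible Dynkin types. -/
inductive LieType | A | B | C | D | E | F | G
deriving DecidableEq

/-- The Cartan matrix of type `A_n` (1-based indices): entry `(i,j)` is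
`⟨α_i, α_j^∨⟩`. -/
def cartanA (i j : ℕ) : ℤ :=
  if i = j then 2 else if i + 1 = j ∨ j + 1 = i then -1 else 0

/-- The Cartan matrices of the irreducible types in the standard (Bourbaki/Humphreys)
numbering of the Dynkin diagram: `cartanEntry t n i j = ⟨α_i, α_j^∨⟩` (1-based). -/
def cartanEntry : LieType → ℕ → ℕ → ℕ → ℤ
  | .A, _, i, j => cartanA i j
  | .B, n, i, j => if i + 1 = n ∧ j = n then -2 else cartanA i j
  | .C, n, i, j => if i = n ∧ j + 1 = n then -2 else cartanA i j
  | .D, n, i, j =>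
      if i = j then 2
      else if (i + 2 = n ∧ j = n) ∨ (i = n ∧ j + 2 = n) then -1
      else if (i + 1 = n ∧ j = n) ∨ (i = n ∧ j + 1 = n) then 0
      else cartanA i j
  | .E, _, i, j =>
      if i = j then 2
      else if (i = 1 ∧ j = 3) ∨ (i = 3 ∧ j = 1) ∨ (i = 2 ∧ j = 4) ∨ (i = 4 ∧ j = 2) then -1
      else if (i = 1 ∧ j = 2) ∨ (i = 2 ∧ j = 1) ∨ (i = 2 ∧ j = 3) ∨ (i = 3 ∧ j = 2) then 0
      else cartanA i j
  | .F, _, i, j => if i = 2 ∧ j = 3 then -2 else cartanA i j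
  | .G, _, i, j => if i = 2 ∧ j = 1 then -3 else cartanA i j

/-- The standard basis vector `e_k` (1-based index, junk `0` outside `1 ≤ k ≤ n`). -/
def stdE (n k : ℕ) : EuclideanSpace ℝ (Fin n) :=
  if h : 1 ≤ k ∧ k ≤ n then EuclideanSpace.single ⟨k - 1, by omega⟩ 1 else 0

/-- The labels `B`, `C`, `D` of the classical non-`A` types. -/
inductive BCD | B | C | D
deriving DecidableEq

/-- The root set of `B_n` / `C_n` / `D_n` in the standard realization. -/
def bcdRoots (t : BCD) (n : ℕ) : Set (EuclideanSpace ℝ (Fin n)) :=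
  {v | (∃ i j : ℕ, 1 ≤ i ∧ i < j ∧ j ≤ n ∧
          (v = stdE n i - stdE n j ∨ v = -(stdE n i - stdE n j) ∨
           v = stdE n i + stdE n j ∨ v = -(stdE n i + stdE n j))) ∨
       (match t with
        | .B => ∃ i : ℕ, 1 ≤ i ∧ i ≤ n ∧ (v = stdE n i ∨ v = -stdE n i)
        | .C => ∃ i : ℕ, 1 ≤ i ∧ i ≤ n ∧ (v = (2:ℝ) • stdE n i ∨ v = -((2:ℝ) • stdE n i))
        | .D => False)}

/-- The positive roots of `B_n` / `C_n` / `D_n` in the standard realization. -/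
def bcdPos (t : BCD) (n : ℕ) : Set (EuclideanSpace ℝ (Fin n)) :=
  {v | (∃ i j : ℕ, 1 ≤ i ∧ i < j ∧ j ≤ n ∧
          (v = stdE n i - stdE n j ∨ v = stdE n i + stdE n j)) ∨
       (match t with
        | .B => ∃ i : ℕ, 1 ≤ i ∧ i ≤ n ∧ v = stdE n i
        | .C => ∃ i : ℕ, 1 ≤ i ∧ i ≤ n ∧ v = (2:ℝ) • stdE n i
        | .D => False)}

/-- The simple roots of `B_n` / `C_n` / `D_n` in the standard realization. -/
def bcdSimple (t : BCD) (n : ℕ) : Set (EuclideanSpace ℝ (Fin n)) :=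
  {v | (∃ i : ℕ, 1 ≤ i ∧ i < n ∧ v = stdE n i - stdE n (i + 1)) ∨
       (match t with
        | .B => v = stdE n n
        | .C => v = (2:ℝ) • stdE n n
        | .D => v = stdE n (n - 1) + stdE n n)}

/-- The simple root `α_k` of `B_n` / `C_n` / `D_n` (1-based index `k`). -/
def bcdAlpha (t : BCD) (n k : ℕ) : EuclideanSpace ℝ (Fin n) :=
  if k < n then stdE n k - stdE n (k + 1)
  else match t with
  | .B => stdE n n
  | .C => (2:ℝ) • stdE n n
  | .D => stdE n (n - 1) + stdE n n

lemma reflV_apply (α v : V) : reflV α v = v - ⟪v, coroot α⟫ • α := by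
  unfold reflV
  split_ifs with h
  · have : α = 0 := inner_self_eq_zero.mp h
    subst this
    simp
  · simp [Module.reflection_apply, corootForm]

lemma inner_coroot (α v : V) : ⟪v, coroot α⟫ = (2 / ⟪α, α⟫) * ⟪v, α⟫ := by
  simp [coroot, real_inner_smul_right]

lemma inner_reflV_self (α v : V) : ⟪reflV α v, reflV α v⟫ = ⟪v, v⟫ := by
  by_cases h : α = 0
  · subst h; simp [reflV_apply]
  · have h' : ⟪α, α⟫ ≠ 0 := fun h2 => h (inner_self_eq_zero.mp h2)
    simp only [reflV_apply, inner_coroot, inner_sub_left, inner_sub_right, real_inner_smul_left,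
      real_inner_smul_right]
    rw [real_inner_comm v α]
    field_simp
    ring

lemma coroot_reflV (α v : V) : coroot (reflV α v) = reflV α (coroot v) := by
  rw [coroot, inner_reflV_self, coroot, map_smul]

lemma reflV_coroot (α v : V) : reflV α (coroot v) = coroot v - ⟪α, coroot v⟫ • coroot α := by
  rw [reflV_apply, inner_coroot]
  change _ = coroot v - ⟪α, coroot v⟫ • ((2 / ⟪α, α⟫) • α)
  rw [smul_smul, real_inner_comm (coroot v) α, mul_comm]

lemma apply_coroot (l : HStar V) (α : V) : l (coroot α) = ((2 / ⟪α, α⟫ : ℝ) : ℂ) * l α := by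
  simp only [coroot, map_smul, Complex.real_smul]

lemma mem_span_simple (S : RootSys V) (α : V) (h : α ∈ S.pos) :
    α ∈ Submodule.span ℝ (S.Δ : Set V) := by
  obtain ⟨c, -, hc⟩ := S.simple_gen α h
  rw [hc]
  exact Submodule.sum_mem _ fun i hi => Submodule.smul_mem _ _ (Submodule.subset_span hi)

/-- The basis of simple roots. -/
def simpleBasis (S : RootSys V) : Module.Basis {a : V // a ∈ S.Δ} ℝ V :=
  Module.Basis.mk S.simple_indep (by
    rw [← S.span_eq_top, Submodule.span_le]
    intro α hα
    have hr : Set.range (fun x : {a : V // a ∈ S.Δ} => x.1) = (S.Δ : Set V) := by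
      ext; simp
    rw [hr]
    rcases S.mem_pos_or α hα with h | h
    · exact mem_span_simple S α h
    · simpa using Submodule.neg_mem _ (mem_span_simple S _ h))

lemma simpleBasis_apply (S : RootSys V) (i : {a : V // a ∈ S.Δ}) : simpleBasis S i = i.1 := by
  simp [simpleBasis]

lemma repr_simple (S : RootSys V) (i j : {a : V // a ∈ S.Δ}) :
    (simpleBasis S).repr i.1 j = if i = j then 1 else 0 := by
  rw [← simpleBasis_apply, Module.Basis.repr_self, Finsupp.single_apply]

lemma repr_nonneg (S : RootSys V) (α : V) (h : α ∈ S.pos) (i : {a : V // a ∈ S.Δ}) :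
    0 ≤ (simpleBasis S).repr α i := by
  obtain ⟨c, h0, hc⟩ := S.simple_gen α h
  have : α = ∑ j : {a : V // a ∈ S.Δ}, c j.1 • simpleBasis S j := by
    rw [hc, ← Finset.sum_coe_sort]
    simp only [simpleBasis_apply]
  rw [this, Module.Basis.repr_sum_self]
  exact h0 _ i.2

lemma sum_repr_simple (S : RootSys V) (α : V) :
    ∑ i, (simpleBasis S).repr α i • i.1 = α := by
  have := (simpleBasis S).sum_repr α
  simpa only [simpleBasis_apply] using this

lemma repr_zero_of_mem_span (S : RootSys V) (I : Finset V) (hI : I ⊆ S.Δ) (α : V)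
    (h : α ∈ Submodule.span ℝ (I : Set V)) (i : {a : V // a ∈ S.Δ}) (hi : i.1 ∉ I) :
    (simpleBasis S).repr α i = 0 := by
  induction h using Submodule.span_induction with
  | mem x hx =>
    have := repr_simple S ⟨x, hI hx⟩ i
    simp only at this
    rw [this, if_neg]
    rintro rfl
    exact hi hx
  | zero => simp
  | add x y _ _ hx hy => simp [hx, hy]
  | smul c x _ hx => simp [hx]

lemma mem_span_of_repr_zero (S : RootSys V) (I : Finset V) (α : V)
    (h : ∀ i : {a : V // a ∈ S.Δ}, i.1 ∉ I → (simpleBasis S).repr α i = 0) :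
    α ∈ Submodule.span ℝ (I : Set V) := by
  rw [← sum_repr_simple S α]
  refine Submodule.sum_mem _ fun i _ => ?_
  by_cases hi : i.1 ∈ I
  · exact Submodule.smul_mem _ _ (Submodule.subset_span hi)
  · rw [h i hi, zero_smul]; exact Submodule.zero_mem _

lemma height_aux (S : RootSys V) (I : Finset V) (hI : I ⊆ S.Δ) (n : ℕ) :
    ∀ α ∈ S.pos, ∑ i, (simpleBasis S).repr α i < n → α ∈ Submodule.span ℝ (I : Set V) →
      α ∈ Submodule.span ℤ (I : Set V) ∧ coroot α ∈ Submodule.span ℤ (coroot '' (I : Set V)) := by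
  induction n with
  | zero =>
    intro α hα h
    exfalso
    have := Finset.sum_nonneg (s := Finset.univ) fun i _ => repr_nonneg S α hα i
    push_cast at h
    linarith
  | succ n ih =>
    intro α hα hn hs
    have hΦ := S.pos_subset hα
    have hpos : 0 < ⟪α, α⟫ := real_inner_self_pos.mpr (S.ne_zero α hΦ)
    have hex : ∃ i, 0 < (simpleBasis S).repr α i * ⟪α, i.1⟫ := by
      by_contra hcon
      push Not at hcon
      have h1 : ⟪α, α⟫ = ∑ i, (simpleBasis S).repr α i * ⟪α, i.1⟫ := by
        conv_lhs => rw [← sum_repr_simple S α]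
        rw [sum_repr_simple S α]
        nth_rw 2 [← sum_repr_simple S α]
        rw [inner_sum]
        simp only [real_inner_smul_right]
      have := Finset.sum_nonpos (s := Finset.univ) fun i _ => hcon i
      linarith
    obtain ⟨i, hi⟩ := hex
    have hci := repr_nonneg S α hα i
    have hci' : 0 < (simpleBasis S).repr α i := lt_of_le_of_ne hci (fun h => by simp [← h] at hi)
    have hin : 0 < ⟪α, i.1⟫ := by
      by_contra hcon
      push Not at hcon
      nlinarith
    have hiI : i.1 ∈ I := by
      by_contra hcon
      exact hci'.ne' (repr_zero_of_mem_span S I hI α hs i hcon)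
    by_cases hαi : α = i.1
    · rw [hαi]
      exact ⟨Submodule.subset_span hiI, Submodule.subset_span ⟨_, hiI, rfl⟩⟩
    have hiΦ : i.1 ∈ S.Φ := S.pos_subset (S.simple_subset i.2)
    obtain ⟨m, hm⟩ := S.crystallographic i.1 hiΦ α hΦ
    obtain ⟨k, hk⟩ := S.crystallographic α hΦ i.1 hiΦ
    have hipos : 0 < ⟪i.1, i.1⟫ := real_inner_self_pos.mpr (S.ne_zero _ hiΦ)
    have hmpos : (0 : ℝ) < m := by
      rw [← hm, inner_coroot]; positivity
    have hm1 : (1 : ℝ) ≤ m := by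
      have : (0 : ℤ) < m := by exact_mod_cast hmpos
      exact_mod_cast this
    have hr : reflV i.1 α = α - (m : ℝ) • i.1 := by rw [reflV_apply, hm]
    have hrΦ : reflV i.1 α ∈ S.Φ := S.refl_mem _ hiΦ _ hΦ
    have hrepr : ∀ j, (simpleBasis S).repr (reflV i.1 α) j =
        (simpleBasis S).repr α j - m * (if i = j then 1 else 0) := by
      intro j
      rw [hr, map_sub, map_smul, Finsupp.sub_apply, Finsupp.smul_apply, repr_simple, smul_eq_mul]
    have hrpos : reflV i.1 α ∈ S.pos := by
      rcases S.mem_pos_or _ hrΦ with h | h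
      · exact h
      · exfalso
        have hz : ∀ j, j ≠ i → (simpleBasis S).repr α j = 0 := by
          intro j hj
          have h1 := repr_nonneg S _ h j
          rw [map_neg, Finsupp.neg_apply, hrepr, if_neg (Ne.symm hj)] at h1
          have h2 := repr_nonneg S α hα j
          linarith
        have h3 : α = (simpleBasis S).repr α i • i.1 := by
          conv_lhs => rw [← sum_repr_simple S α]
          exact Finset.sum_eq_single i (fun j _ hj => by rw [hz j hj, zero_smul]) (by simp)
        rcases S.reduced i.1 hiΦ _ (h3 ▸ hΦ) with h4 | h4
        · rw [h4, one_smul] at h3; exact hαi h3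
        · linarith
    have hsum : ∑ j, (simpleBasis S).repr (reflV i.1 α) j < n := by
      simp only [hrepr, Finset.sum_sub_distrib, ← Finset.mul_sum]
      rw [Finset.sum_ite_eq]
      simp only [Finset.mem_univ, if_true]
      push_cast at hn
      linarith
    have hspan : reflV i.1 α ∈ Submodule.span ℝ (I : Set V) := by
      rw [hr]
      exact Submodule.sub_mem _ hs (Submodule.smul_mem _ _ (Submodule.subset_span hiI))
    obtain ⟨h5, h6⟩ := ih _ hrpos hsum hspan
    constructor
    · have : α = reflV i.1 α + m • i.1 := by rw [hr, Int.cast_smul_eq_zsmul]; abel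
      rw [this]
      exact Submodule.add_mem _ h5 (Submodule.smul_mem _ _ (Submodule.subset_span hiI))
    · have : coroot α = coroot (reflV i.1 α) + k • coroot i.1 := by
        rw [coroot_reflV, reflV_coroot, hk, Int.cast_smul_eq_zsmul]; abel
      rw [this]
      exact Submodule.add_mem _ h6 (Submodule.smul_mem _ _ (Submodule.subset_span ⟨_, hiI, rfl⟩))

lemma height_lemma (S : RootSys V) (I : Finset V) (hI : I ⊆ S.Δ) (α : V) (hα : α ∈ S.pos)
    (h : α ∈ Submodule.span ℝ (I : Set V)) :
    α ∈ Submodule.span ℤ (I : Set V) ∧ coroot α ∈ Submodule.span ℤ (coroot '' (I : Set V)) := by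
  obtain ⟨n, hn⟩ := exists_nat_gt (∑ i, (simpleBasis S).repr α i)
  exact height_aux S I hI n α hα hn h

lemma span_int_le_real {A : Set V} {v : V} (h : v ∈ Submodule.span ℤ A) :
    v ∈ Submodule.span ℝ A := by
  induction h using Submodule.span_induction with
  | mem x hx => exact Submodule.subset_span hx
  | zero => exact Submodule.zero_mem _
  | add x y _ _ hx hy => exact Submodule.add_mem _ hx hy
  | smul c x _ hx =>
    rw [← Int.cast_smul_eq_zsmul ℝ]; exact Submodule.smul_mem _ _ hx

lemma mem_PhiI_iff (S : RootSys V) (I : Finset V) (hI : I ⊆ S.Δ) (α : V) :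
    α ∈ PhiI S I ↔ α ∈ S.Φ ∧ α ∈ Submodule.span ℝ (I : Set V) := by
  constructor
  · rintro ⟨h1, h2⟩
    exact ⟨h1, span_int_le_real h2⟩
  · rintro ⟨h1, h2⟩
    refine ⟨h1, ?_⟩
    rcases S.mem_pos_or α h1 with h | h
    · exact (height_lemma S I hI α h h2).1
    · simpa using Submodule.neg_mem _ (height_lemma S I hI _ h (Submodule.neg_mem _ h2)).1

lemma repr_int (S : RootSys V) (α : V) (h : α ∈ S.Φ) (i : {a : V // a ∈ S.Δ}) :
    ∃ n : ℤ, (simpleBasis S).repr α i = n := by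
  have hs : α ∈ Submodule.span ℤ (S.Δ : Set V) := by
    refine ((mem_PhiI_iff S S.Δ (Finset.Subset.refl _) α).2 ⟨h, ?_⟩).2
    exact mem_span_of_repr_zero S _ _ fun i hi => absurd i.2 hi
  clear h
  induction hs using Submodule.span_induction with
  | mem x hx =>
    have := repr_simple S ⟨x, hx⟩ i
    simp only at this
    rw [this]
    split_ifs
    · exact ⟨1, by simp⟩
    · exact ⟨0, by simp⟩
  | zero => exact ⟨0, by simp⟩
  | add x y _ _ hx hy =>
    obtain ⟨a, ha⟩ := hx
    obtain ⟨b, hb⟩ := hy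
    exact ⟨a + b, by simp [ha, hb]⟩
  | smul c x _ hx =>
    obtain ⟨a, ha⟩ := hx
    exact ⟨c * a, by
      rw [← Int.cast_smul_eq_zsmul ℝ, map_smul, Finsupp.smul_apply, ha]; simp⟩

lemma simple_mem_PhiI (S : RootSys V) (I : Finset V) (hI : I ⊆ S.Δ) (α : V) (h : α ∈ I) :
    α ∈ PhiI S I ∩ (S.pos : Set V) :=
  ⟨⟨S.pos_subset (S.simple_subset (hI h)), Submodule.subset_span h⟩, S.simple_subset (hI h)⟩

lemma lambdaP_pos (S : RootSys V) (I : Finset V) (hI : I ⊆ S.Δ) (mu : HStar V)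
    (hmu : mu ∈ LambdaP (I : Set V)) (α : V) (hα : α ∈ PhiI S I ∩ (S.pos : Set V)) :
    IsPosInt (mu (coroot α)) := by
  obtain ⟨h1, h2⟩ := hα
  have hs := span_int_le_real h1.2
  have hint : IsInt (mu (coroot α)) := by
    have h3 := (height_lemma S I hI α h2 hs).2
    generalize coroot α = v at h3
    induction h3 using Submodule.span_induction with
    | mem x hx =>
      obtain ⟨i, hi, rfl⟩ := hx
      obtain ⟨n, -, hn⟩ := hmu i hi
      exact ⟨n, hn⟩
    | zero => exact ⟨0, by simp⟩
    | add x y _ _ hx hy =>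
      obtain ⟨a, ha⟩ := hx
      obtain ⟨b, hb⟩ := hy
      exact ⟨a + b, by simp [ha, hb]⟩
    | smul c x _ hx =>
      obtain ⟨a, ha⟩ := hx
      exact ⟨c * a, by simp [ha]⟩
  obtain ⟨n, hn⟩ := hint
  refine ⟨n, ?_, hn⟩
  have hsimple : ∀ i ∈ I, 0 < (mu i).re := by
    intro i hi
    obtain ⟨k, hk, hk2⟩ := hmu i hi
    have hipos : 0 < ⟪i, i⟫ :=
      real_inner_self_pos.mpr (S.ne_zero _ (S.pos_subset (S.simple_subset (hI hi))))
    rw [apply_coroot] at hk2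
    have h4 := congrArg Complex.re hk2
    rw [Complex.re_ofReal_mul, Complex.intCast_re] at h4
    have h5 : (0 : ℝ) < k := by exact_mod_cast hk
    rw [← h4] at h5
    exact (pos_iff_pos_of_mul_pos h5).1 (by positivity)
  have hapos : 0 < ⟪α, α⟫ := real_inner_self_pos.mpr (S.ne_zero _ h1.1)
  have hre : 0 < (mu α).re := by
    have h6 : (mu α).re = ∑ i, (simpleBasis S).repr α i * (mu i.1).re := by
      conv_lhs => rw [← sum_repr_simple S α]
      simp
    have hnn : ∀ i ∈ Finset.univ, 0 ≤ (simpleBasis S).repr α i * (mu i.1).re := by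
      intro i _
      by_cases hi : i.1 ∈ I
      · exact mul_nonneg (repr_nonneg S α h2 i) (hsimple _ hi).le
      · rw [repr_zero_of_mem_span S I hI α hs i hi, zero_mul]
    rw [h6]
    refine lt_of_le_of_ne (Finset.sum_nonneg hnn) fun h0 => ?_
    have h7 := (Finset.sum_eq_zero_iff_of_nonneg hnn).1 h0.symm
    apply S.ne_zero α h1.1
    rw [← sum_repr_simple S α]
    refine Finset.sum_eq_zero fun i hi => ?_
    by_cases hiI : i.1 ∈ I
    · have := h7 i hi
      rw [(mul_eq_zero.1 this).resolve_right (hsimple _ hiI).ne', zero_smul]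
    · rw [repr_zero_of_mem_span S I hI α hs i hiI, zero_smul]
  rw [apply_coroot] at hn
  have h4 := congrArg Complex.re hn
  rw [Complex.re_ofReal_mul, Complex.intCast_re] at h4
  have : (0 : ℝ) < n := by rw [← h4]; positivity
  exact_mod_cast this

lemma weyl_sub_mem (P : Set V) (w : V ≃ₗ[ℝ] V) (hw : w ∈ weyl P) :
    ∀ v, w v - v ∈ Submodule.span ℝ P := by
  induction hw using Subgroup.closure_induction with
  | mem x hx =>
    obtain ⟨α, hα, rfl⟩ := hx
    intro v
    rw [reflV_apply, sub_sub_cancel_left]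
    exact Submodule.neg_mem _ (Submodule.smul_mem _ _ (Submodule.subset_span hα))
  | one => intro v; simp
  | mul x y _ _ hx hy =>
    intro v
    have := Submodule.add_mem _ (hx (y v)) (hy v)
    simpa using this
  | inv x _ hx =>
    intro v
    have := Submodule.neg_mem _ (hx (x⁻¹ v))
    have h2 : x (x⁻¹ v) = v := x.apply_symm_apply v
    rw [h2] at this
    simpa using this

lemma weyl_perp (P : Set V) (U : Submodule ℝ V) (hPU : P ⊆ U) (w : V ≃ₗ[ℝ] V) (hw : w ∈ weyl P) :
    ∀ v ∈ Uᗮ, w v = v := by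
  induction hw using Subgroup.closure_induction with
  | mem x hx =>
    obtain ⟨α, hα, rfl⟩ := hx
    intro v hv
    have : ⟪v, α⟫ = 0 := Submodule.inner_left_of_mem_orthogonal (hPU hα) hv
    rw [reflV_apply, inner_coroot, this]
    simp
  | one => intro v _; rfl
  | mul x y _ _ hx hy =>
    intro v hv
    change x (y v) = v
    rw [hy v hv, hx v hv]
  | inv x _ hx =>
    intro v hv
    have h := hx v hv
    change x.symm v = v
    rw [LinearEquiv.symm_apply_eq, h]

lemma weyl_mem_sub (P : Set V) (U : Submodule ℝ V) (hPU : P ⊆ U) (w : V ≃ₗ[ℝ] V)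
    (hw : w ∈ weyl P) (v : V) (hv : v ∈ U) : w v ∈ U := by
  have h1 : w v - v ∈ U := (Submodule.span_le.2 hPU) (weyl_sub_mem P w hw v)
  simpa using Submodule.add_mem _ h1 hv

lemma neg_mem_root (S : RootSys V) (α : V) (h : α ∈ S.Φ) : -α ∈ S.Φ := by
  have h1 := S.refl_mem α h α h
  have h2 : ⟪α, coroot α⟫ = 2 :=
    corootForm_self (α := α) (fun h0 => S.ne_zero α h (inner_self_eq_zero.1 h0))
  rw [reflV_apply, h2] at h1
  convert h1 using 1
  module

lemma weyl_mem_root (S : RootSys V) (P : Set V) (hP : P ⊆ (S.Φ : Set V)) (w : V ≃ₗ[ℝ] V)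
    (hw : w ∈ weyl P) : ∀ α, w α ∈ S.Φ ↔ α ∈ S.Φ := by
  induction hw using Subgroup.closure_induction with
  | mem x hx =>
    obtain ⟨γ, hγ, rfl⟩ := hx
    intro α
    refine ⟨fun h => ?_, fun h => S.refl_mem γ (hP hγ) α h⟩
    have h1 := S.refl_mem γ (hP hγ) _ h
    have h2 : ⟪γ, coroot γ⟫ = 2 :=
      corootForm_self (α := γ) (fun h0 => S.ne_zero γ (hP hγ) (inner_self_eq_zero.1 h0))
    rw [reflV_apply γ (reflV γ α), reflV_apply, inner_sub_left, real_inner_smul_left, h2] at h1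
    convert h1 using 1
    module
  | one => intro α; rfl
  | mul x y _ _ hx hy =>
    intro α
    change x (y α) ∈ S.Φ ↔ _
    rw [hx, hy]
  | inv x _ hx =>
    intro α
    rw [← hx]
    have h2 : x (x⁻¹ α) = α := x.apply_symm_apply α
    rw [h2]

lemma PhiI_sub_span (S : RootSys V) (I : Finset V) :
    PhiI S I ⊆ (Submodule.span ℝ (I : Set V) : Set V) :=
  fun _ h => span_int_le_real h.2

lemma weyl_mem_PhiI (S : RootSys V) (I : Finset V) (hI : I ⊆ S.Δ) (w : V ≃ₗ[ℝ] V)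
    (hw : w ∈ weyl (PhiI S I)) (α : V) (hα : α ∈ PhiI S I) : w α ∈ PhiI S I := by
  rw [mem_PhiI_iff S I hI] at hα ⊢
  exact ⟨(weyl_mem_root S _ (fun _ h => h.1) w hw α).2 hα.1,
    weyl_mem_sub _ _ (PhiI_sub_span S I) w hw α hα.2⟩

lemma weyl_pos_outside (S : RootSys V) (I : Finset V) (hI : I ⊆ S.Δ) (w : V ≃ₗ[ℝ] V)
    (hw : w ∈ weyl (PhiI S I)) (α : V) (hα : α ∈ S.pos) (hn : α ∉ PhiI S I) : w α ∈ S.pos := by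
  have hΦ : w α ∈ S.Φ := (weyl_mem_root S _ (fun _ h => h.1) w hw α).2 (S.pos_subset hα)
  rcases S.mem_pos_or _ hΦ with h | h
  · exact h
  exfalso
  apply hn
  rw [mem_PhiI_iff S I hI]
  refine ⟨S.pos_subset hα, mem_span_of_repr_zero S I α fun i hi => ?_⟩
  have h1 : w α - α ∈ Submodule.span ℝ (I : Set V) :=
    (Submodule.span_le.2 (PhiI_sub_span S I)) (weyl_sub_mem _ w hw α)
  have h2 := repr_zero_of_mem_span S I hI _ h1 i hi
  rw [map_sub, Finsupp.sub_apply] at h2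
  have h3 := repr_nonneg S _ h i
  rw [map_neg, Finsupp.neg_apply] at h3
  have h4 := repr_nonneg S _ hα i
  linarith

lemma prod_formula (S : RootSys V) (I : Finset V) (hI : I ⊆ S.Δ) (w : V ≃ₗ[ℝ] V)
    (hw : w ∈ weyl (PhiI S I)) (l m : HStar V) (hlm : m = wAct w l) :
    ∏ α ∈ S.pos.filter (· ∈ PhiI S I), l α =
      (-1) ^ len S w * ∏ α ∈ S.pos.filter (· ∈ PhiI S I), m α := by
  set F := S.pos.filter (· ∈ PhiI S I) with hF
  have hl : ∀ α, l α = m (w α) := by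
    intro α; rw [hlm]; simp [wAct]
  let σ : V → V := fun α => if w α ∈ S.pos then w α else -(w α)
  have hσF : ∀ α ∈ F, σ α ∈ F := by
    intro α hα
    rw [hF, Finset.mem_filter] at hα ⊢
    have h1 := weyl_mem_PhiI S I hI w hw α hα.2
    simp only [σ]
    split_ifs with h
    · exact ⟨h, h1⟩
    · exact ⟨(S.mem_pos_or _ h1.1).resolve_left h, neg_mem_root S _ h1.1,
        Submodule.neg_mem _ h1.2⟩
  have hinj : Set.InjOn σ (F : Set V) := by
    intro a ha b hb hab
    have ha' := (Finset.mem_filter.1 ha).1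
    have hb' := (Finset.mem_filter.1 hb).1
    simp only [σ] at hab
    split_ifs at hab with h1 h2 h2
    · exact w.injective hab
    · exfalso
      rw [← map_neg] at hab
      have := w.injective hab
      rw [this] at ha'
      exact S.not_both b hb' ha'
    · exfalso
      rw [← map_neg] at hab
      have := w.injective hab
      rw [← this] at hb'
      exact S.not_both a ha' hb'
    · exact w.injective (neg_injective hab)
  have hprod : ∏ α ∈ F, m (σ α) = ∏ α ∈ F, m α := by
    have himg : F.image σ = F :=
      Finset.eq_of_subset_of_card_le (Finset.image_subset_iff.2 hσF)
        (by rw [Finset.card_image_of_injOn hinj])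
    conv_rhs => rw [← himg]
    rw [Finset.prod_image hinj]
  have hlen : len S w = (F.filter (fun α => w α ∉ S.pos)).card := by
    unfold len
    rw [← Set.ncard_coe_finset]
    congr 1
    ext α
    simp only [Set.mem_ofPred_eq, Finset.coe_filter, hF, Finset.mem_filter, Finset.mem_coe]
    constructor
    · rintro ⟨h1, h2⟩
      refine ⟨⟨h1, ?_⟩, h2⟩
      by_contra h3
      exact h2 (weyl_pos_outside S I hI w hw α h1 h3)
    · rintro ⟨⟨h1, _⟩, h2⟩
      exact ⟨h1, h2⟩
  rw [← hprod, hlen, ← Finset.prod_const, Finset.prod_filter (s := F), ← Finset.prod_mul_distrib]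
  refine Finset.prod_congr rfl fun α _ => ?_
  rw [hl]
  by_cases h : w α ∈ S.pos
  · simp [σ, h]
  · simp [σ, h]

lemma sgnW_ne_zero_iff (S : RootSys V) (P : Set V) (l m : HStar V) :
    sgnW S P l m ≠ 0 ↔
      (IsRegularOn P l ∧ IsRegularOn P m ∧ ∃ w, w ∈ weyl P ∧ m = wAct w l) := by
  unfold sgnW
  split_ifs with h
  · exact ⟨fun _ => h, fun _ => pow_ne_zero _ (by norm_num)⟩
  · simp [h]

lemma sgnW_eq (S : RootSys V) (I : Finset V) (hI : I ⊆ S.Δ) (l m l' m' : HStar V)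
    (hl : ∀ α ∈ PhiI S I, l' α = l α) (hm : ∀ α ∈ PhiI S I, m' α = m α)
    (hw : (∃ w, w ∈ weyl (PhiI S I) ∧ m = wAct w l) ↔
      (∃ w, w ∈ weyl (PhiI S I) ∧ m' = wAct w l')) :
    sgnW S (PhiI S I) l m = sgnW S (PhiI S I) l' m' := by
  have hlr : IsRegularOn (PhiI S I) l ↔ IsRegularOn (PhiI S I) l' :=
    forall₂_congr fun α hα => by rw [hl α hα]
  have hmr : IsRegularOn (PhiI S I) m ↔ IsRegularOn (PhiI S I) m' :=
    forall₂_congr fun α hα => by rw [hm α hα]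
  unfold sgnW
  split_ifs with h1 h2 h2
  · have hs1 := h1.2.2.choose_spec
    have hs2 := h2.2.2.choose_spec
    have p1 := prod_formula S I hI _ hs1.1 l m hs1.2
    have p2 := prod_formula S I hI _ hs2.1 l' m' hs2.2
    rw [Finset.prod_congr rfl fun α hα => hl α (Finset.mem_filter.1 hα).2,
      Finset.prod_congr rfl fun α hα => hm α (Finset.mem_filter.1 hα).2, p1] at p2
    have hne : ∏ α ∈ S.pos.filter (· ∈ PhiI S I), m α ≠ 0 :=
      Finset.prod_ne_zero_iff.2 fun α hα => h1.2.1 α (Finset.mem_filter.1 hα).2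
    have := mul_right_cancel₀ hne p2
    exact_mod_cast this
  · exact absurd ⟨hlr.1 h1.1, hmr.1 h1.2.1, hw.1 h1.2.2⟩ h2
  · exact absurd ⟨hlr.2 h2.1, hmr.2 h2.2.1, hw.2 h2.2.2⟩ h1
  · rfl

lemma hstar_ext (U : Submodule ℝ V) (f g : HStar V) (h1 : ∀ v ∈ U, f v = g v)
    (h2 : ∀ v ∈ Uᗮ, f v = g v) : f = g := by
  ext v
  have h3 := h1 _ (U.starProjection_apply_mem v)
  have h4 := h2 _ (U.sub_starProjection_mem_orthogonal v)
  rw [map_sub, map_sub, h3] at h4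
  exact sub_left_injective h4

lemma emb_perp (U : Submodule ℝ V) (α : V) (hα : α ∈ U) (v : V) (hv : v ∈ Uᗮ) :
    emb α v = 0 := by
  change ((⟪α, v⟫ : ℝ) : ℂ) = 0
  rw [Submodule.inner_right_of_mem_orthogonal hα hv]
  simp

lemma span_emb_perp (Q : Set V) (U : Submodule ℝ V) (hQ : Q ⊆ U) (m : HStar V)
    (hm : m ∈ Submodule.span ℂ (emb '' Q)) (v : V) (hv : v ∈ Uᗮ) : m v = 0 := by
  induction hm using Submodule.span_induction with
  | mem x hx =>
    obtain ⟨α, hα, rfl⟩ := hx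
    exact emb_perp U α (hQ hα) v hv
  | zero => rfl
  | add x y _ _ hx hy => simp [hx, hy]
  | smul c x _ hx => simp [hx]

lemma emb_mem_span (Q : Set V) (v : V) (hv : v ∈ Submodule.span ℝ Q) :
    emb v ∈ Submodule.span ℂ (emb '' Q) := by
  induction hv using Submodule.span_induction with
  | mem x hx => exact Submodule.subset_span ⟨x, hx, rfl⟩
  | zero =>
    convert Submodule.zero_mem _
    ext v; simp [emb]
  | add x y _ _ hx hy =>
    convert Submodule.add_mem _ hx hy
    ext v; simp [emb, inner_add_left]
  | smul c x _ hx =>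
    convert Submodule.smul_mem _ (c : ℂ) hx
    ext v; simp [emb, real_inner_smul_left]

lemma restrict_exists (Q : Set V) (l : HStar V) :
    ∃ m : HStar V, m ∈ Submodule.span ℂ (emb '' Q) ∧ ∀ v ∈ Submodule.span ℝ Q, m v = l v := by
  set U := Submodule.span ℝ Q with hU
  let b := stdOrthonormalBasis ℝ U
  refine ⟨∑ i, l (b i : V) • emb (b i : V), ?_, ?_⟩
  · exact Submodule.sum_mem _ fun i _ => Submodule.smul_mem _ _ (emb_mem_span Q _ (b i).2)
  · intro v hv
    have h1 := b.sum_repr ⟨v, hv⟩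
    have h2 : ∑ i, ⟪(b i : V), v⟫ • (b i : V) = v := by
      have := congrArg (Subtype.val) h1
      change _ = v at this
      conv_rhs => rw [← this]
      simp [b.repr_apply_apply]
    conv_rhs => rw [← h2]
    simp [emb, mul_comm]

lemma restrictW_spec (Q : Set V) (U : Submodule ℝ V) (hU : Submodule.span ℝ Q = U)
    (hQ0 : ∀ α ∈ Q, α ≠ 0) (l : HStar V) :
    restrictW Q l ∈ Submodule.span ℂ (emb '' Q) ∧ (∀ v ∈ U, restrictW Q l v = l v) ∧
      ∀ v ∈ Uᗮ, restrictW Q l v = 0 := by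
  have hQU : Q ⊆ U := hU ▸ Submodule.subset_span
  obtain ⟨m, hm1, hm2⟩ := restrict_exists Q l
  have hco : ∀ α ∈ Q, coroot α ∈ Submodule.span ℝ Q := fun α hα =>
    Submodule.smul_mem _ _ (Submodule.subset_span hα)
  have hsp : restrictW Q l ∈ Submodule.span ℂ (emb '' Q) ∧
      ∀ α ∈ Q, restrictW Q l (coroot α) = l (coroot α) :=
    Classical.epsilon_spec (p := fun m : HStar V => m ∈ Submodule.span ℂ (emb '' Q) ∧
      ∀ α ∈ Q, m (coroot α) = l (coroot α)) ⟨m, hm1, fun α hα => hm2 _ (hco α hα)⟩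
  refine ⟨hsp.1, ?_, span_emb_perp Q U hQU _ hsp.1⟩
  rw [← hU]
  intro v hv
  induction hv using Submodule.span_induction with
  | mem x hx =>
    have h1 := hsp.2 x hx
    rw [apply_coroot, apply_coroot] at h1
    refine mul_left_cancel₀ ?_ h1
    have : ⟪x, x⟫ ≠ 0 := fun h0 => hQ0 x hx (inner_self_eq_zero.1 h0)
    exact_mod_cast div_ne_zero two_ne_zero this
  | zero => simp
  | add x y _ _ hx hy => simp [hx, hy]
  | smul c x _ hx => simp [hx]

lemma wAct_perp (P : Set V) (U : Submodule ℝ V) (hPU : P ⊆ U) (w : V ≃ₗ[ℝ] V) (hw : w ∈ weyl P)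
    (l : HStar V) (v : V) (hv : v ∈ Uᗮ) : wAct w l v = l v := by
  change l (w⁻¹ v) = l v
  rw [weyl_perp P U hPU _ (inv_mem hw) v hv]

lemma wAct_congr (P : Set V) (U : Submodule ℝ V) (hPU : P ⊆ U) (w : V ≃ₗ[ℝ] V) (hw : w ∈ weyl P)
    (l l' : HStar V) (h : ∀ v ∈ U, l v = l' v) (v : V) (hv : v ∈ U) : wAct w l v = wAct w l' v :=
  h _ (weyl_mem_sub P U hPU _ (inv_mem hw) v hv)

lemma subset_ratSpan (S : RootSys V) (A : Set V) (hA : A ⊆ (S.Φ : Set V)) :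
    A ⊆ ratSpanRoots S A := by
  intro α hα
  exact ⟨hA hα, {α}, fun _ => 1, by simpa using hα, by simp⟩

lemma ratSpan_sub (S : RootSys V) (A : Set V) :
    ratSpanRoots S A ⊆ (Submodule.span ℝ A : Set V) := by
  rintro γ ⟨_, t, c, ht, rfl⟩
  exact Submodule.sum_mem _ fun α hα => Submodule.smul_mem _ _ (Submodule.subset_span (ht hα))

lemma span_ratSpan (S : RootSys V) (A : Set V) (hA : A ⊆ (S.Φ : Set V)) :
    Submodule.span ℝ (ratSpanRoots S A) = Submodule.span ℝ A :=
  le_antisymm (Submodule.span_le.2 (ratSpan_sub S A)) (Submodule.span_mono (subset_ratSpan S A hA))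

lemma mem_ratSpan (S : RootSys V) (I : Finset V) (hI : I ⊆ S.Δ) (β : V) (hβ : β ∈ S.Φ)
    (hβP : β ∉ PhiI S I) (γ : V) (hγ : γ ∈ S.Φ)
    (h : γ ∈ Submodule.span ℝ (PhiI S I ∪ {β})) : γ ∈ ratSpanRoots S (PhiI S I ∪ {β}) := by
  rw [Set.union_singleton, Submodule.mem_span_insert] at h
  obtain ⟨c, x, hx, hγx⟩ := h
  have hxI : x ∈ Submodule.span ℝ (I : Set V) := (Submodule.span_le.2 (PhiI_sub_span S I)) hx
  have hj : ∃ j : {a : V // a ∈ S.Δ}, j.1 ∉ I ∧ (simpleBasis S).repr β j ≠ 0 := by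
    by_contra hcon
    push Not at hcon
    exact hβP ((mem_PhiI_iff S I hI β).2 ⟨hβ, mem_span_of_repr_zero S I β hcon⟩)
  obtain ⟨j, hjI, hj0⟩ := hj
  choose g hg using repr_int S γ hγ
  choose b hb using repr_int S β hβ
  have hc : c = (((g j : ℚ) / (b j : ℚ) : ℚ) : ℝ) := by
    have h1 : (simpleBasis S).repr γ j = c * (simpleBasis S).repr β j := by
      rw [hγx, map_add, map_smul, Finsupp.add_apply, Finsupp.smul_apply,
        repr_zero_of_mem_span S I hI x hxI j hjI, add_zero, smul_eq_mul]
    push_cast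
    rw [← hg, ← hb, h1, mul_div_cancel_right₀ _ hj0]
  set q : ℚ := (g j : ℚ) / (b j : ℚ) with hq
  have hxr : ∀ i, (simpleBasis S).repr x i = (((g i : ℚ) - q * b i : ℚ) : ℝ) := by
    intro i
    have : x = γ - c • β := by rw [hγx]; abel
    rw [this, map_sub, map_smul, Finsupp.sub_apply, Finsupp.smul_apply, hg, hb, hc]
    push_cast
    rfl
  have hβI : β ∉ I := fun hi => hβP (simple_mem_PhiI S I hI β hi).1
  let d : V → ℚ := fun v => if h : v ∈ S.Δ then (g ⟨v, h⟩ : ℚ) - q * b ⟨v, h⟩ else 0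
  have hxsum : x = ∑ v ∈ I, (d v : ℝ) • v := by
    have h2 : x = ∑ v ∈ S.Δ, (d v : ℝ) • v := by
      rw [← Finset.sum_coe_sort]
      conv_lhs => rw [← sum_repr_simple S x]
      refine Finset.sum_congr rfl fun i _ => ?_
      rw [hxr]
      simp [d]
    conv_lhs => rw [h2]
    refine (Finset.sum_subset hI fun v hv hvI => ?_).symm
    have h3 := repr_zero_of_mem_span S I hI x hxI ⟨v, hv⟩ hvI
    rw [hxr] at h3
    have h4 : d v = (g ⟨v, hv⟩ : ℚ) - q * b ⟨v, hv⟩ := by simp [d, hv]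
    rw [h4, h3, zero_smul]
  refine ⟨hγ, insert β I, fun v => if v = β then q else d v, ?_, ?_⟩
  · intro v hv
    rcases Finset.mem_insert.1 hv with rfl | hv
    · right; rfl
    · left; exact (simple_mem_PhiI S I hI v hv).1
  · rw [Finset.sum_insert hβI, hγx, hc]
    simp only [if_true]
    congr 1
    conv_lhs => rw [hxsum]
    refine Finset.sum_congr rfl fun v hv => ?_
    rw [if_neg]
    rintro rfl
    exact hβI hv

lemma sRefl_apply (γ : V) (l : HStar V) (v : V) :
    sRefl γ l v = l v - l (coroot γ) * (⟪γ, v⟫ : ℝ) := by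
  simp [sRefl, emb]



/-- Lemma 4.8 (Parabolic invariance): for `λ ∈ Λ_I⁺` and `β ∈ Ψ_λ⁺`
(note `Φ_I ⊆ Φ_{β,1}`), there is `μ ∈ Λ_I⁺` with `sgn(s_β λ, μ) ≠ 0` iff there is
`μ' ∈ Λ⁺(Φ_I, Φ_{β,1})` with `sgn(s_β (λ|_{Φ_{β,1}}), μ', Φ_I, Φ_{β,1}) ≠ 0`;
and if `sgn(s_β λ, μ) ≠ 0` then `μ' = μ|_{Φ_{β,1}}` works and
`c(λ, μ) = c(λ|_{Φ_{β,1}}, μ|_{Φ_{β,1}}, Φ_I, Φ_{β,1})`. -/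
theorem statement_7 {V : Type*} [NormedAddCommGroup V] [InnerProductSpace ℝ V]
    [FiniteDimensional ℝ V]
    (S : RootSys V) (I : Finset V) (hI : I ⊆ S.Δ)
    (lam : HStar V) (hlam : lam ∈ LambdaP (I : Set V))
    (β : V) (hβ : β ∈ PsiP S (PhiI S I) (S.Φ : Set V) lam) :
    ((∃ mu ∈ LambdaP (I : Set V), sgnW S (PhiI S I) (sRefl β lam) mu ≠ 0) ↔
      (∃ mu' ∈ LambdaPSub S (PhiI S I) (ratSpanRoots S (PhiI S I ∪ {β})),
        sgnW S (PhiI S I)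
          (sRefl β (restrictW (ratSpanRoots S (PhiI S I ∪ {β})) lam)) mu' ≠ 0)) ∧
    (∀ mu ∈ LambdaP (I : Set V), sgnW S (PhiI S I) (sRefl β lam) mu ≠ 0 →
      restrictW (ratSpanRoots S (PhiI S I ∪ {β})) mu ∈
        LambdaPSub S (PhiI S I) (ratSpanRoots S (PhiI S I ∪ {β})) ∧
      sgnW S (PhiI S I) (sRefl β (restrictW (ratSpanRoots S (PhiI S I ∪ {β})) lam))
        (restrictW (ratSpanRoots S (PhiI S I ∪ {β})) mu) ≠ 0 ∧
      jc S (PhiI S I) (S.Φ : Set V) lam mu =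
        jc S (PhiI S I) (ratSpanRoots S (PhiI S I ∪ {β}))
          (restrictW (ratSpanRoots S (PhiI S I ∪ {β})) lam)
          (restrictW (ratSpanRoots S (PhiI S I ∪ {β})) mu)) := by
  obtain ⟨⟨hβΦ, hβpos⟩, hβP, hβint⟩ := hβ
  set P := PhiI S I with hPdef
  have hPΦ : P ⊆ (S.Φ : Set V) := fun _ h => h.1
  have hAΦ : P ∪ {β} ⊆ (S.Φ : Set V) := by
    rintro x (h | rfl)
    · exact hPΦ h
    · exact hβΦ
  set U := Submodule.span ℝ (P ∪ {β}) with hU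
  have hQspan := span_ratSpan S _ hAΦ
  have hQmem : ∀ γ, γ ∈ ratSpanRoots S (P ∪ {β}) ↔ γ ∈ S.Φ ∧ γ ∈ U := fun γ =>
    ⟨fun h => ⟨h.1, ratSpan_sub S _ h⟩, fun h => mem_ratSpan S I hI β hβΦ hβP γ h.1 h.2⟩
  set Q := ratSpanRoots S (P ∪ {β}) with hQdef
  have hspec := restrictW_spec Q U hQspan (fun α h => S.ne_zero α h.1)
  have hPU : P ⊆ U := fun x h => Submodule.subset_span (Or.inl h)
  have hβU : β ∈ U := Submodule.subset_span (Or.inr rfl)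
  have hcoU : ∀ α ∈ U, coroot α ∈ U := fun α h => Submodule.smul_mem _ _ h
  -- reflections commute with restriction
  have hsU : ∀ l : HStar V, ∀ γ ∈ U, ∀ v ∈ U, sRefl γ (restrictW Q l) v = sRefl γ l v := by
    intro l γ hγ v hv
    rw [sRefl_apply, sRefl_apply, (hspec l).2.1 v hv, (hspec l).2.1 _ (hcoU γ hγ)]
  have hsperp : ∀ l : HStar V, ∀ γ ∈ U, ∀ v ∈ Uᗮ, sRefl γ l v = l v := by
    intro l γ hγ v hv
    rw [sRefl_apply, Submodule.inner_right_of_mem_orthogonal hγ hv]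
    simp
  have hwr : ∀ l m : HStar V, ∀ γ ∈ U, ∀ w ∈ weyl P, m = wAct w (sRefl γ l) →
      restrictW Q m = wAct w (sRefl γ (restrictW Q l)) := by
    intro l m γ hγ w hw hm
    apply hstar_ext U
    · intro v hv
      rw [(hspec m).2.1 v hv, hm]
      exact (wAct_congr P U hPU w hw _ _ (hsU l γ hγ) v hv).symm
    · intro v hv
      rw [(hspec m).2.2 v hv, wAct_perp P U hPU w hw _ v hv, hsperp _ γ hγ v hv,
        (hspec l).2.2 v hv]
  have hLam : ∀ mu ∈ LambdaP (I : Set V), restrictW Q mu ∈ LambdaPSub S P Q := by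
    intro mu hmu
    refine ⟨(hspec mu).1, fun α hα => ?_⟩
    rw [(hspec mu).2.1 _ (hcoU α (hPU hα.1))]
    exact lambdaP_pos S I hI mu hmu α hα
  have hsgn : ∀ mu, sgnW S P (sRefl β lam) mu ≠ 0 →
      sgnW S P (sRefl β (restrictW Q lam)) (restrictW Q mu) ≠ 0 := by
    intro mu h
    rw [sgnW_ne_zero_iff] at h ⊢
    obtain ⟨h1, h2, w, hw, hm⟩ := h
    refine ⟨fun α hα => ?_, fun α hα => ?_, w, hw, hwr lam mu β hβU w hw hm⟩
    · rw [hsU lam β hβU α (hPU hα)]; exact h1 α hα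
    · rw [(hspec mu).2.1 α (hPU hα)]; exact h2 α hα
  refine ⟨⟨?_, ?_⟩, ?_⟩
  · rintro ⟨mu, hmu, h⟩
    exact ⟨_, hLam mu hmu, hsgn mu h⟩
  · rintro ⟨mu', hmu', h⟩
    rw [sgnW_ne_zero_iff] at h
    obtain ⟨h1, h2, w, hw, hm⟩ := h
    have hagree : ∀ v ∈ U, wAct w (sRefl β lam) v = mu' v := by
      intro v hv
      rw [hm]
      exact (wAct_congr P U hPU w hw _ _ (hsU lam β hβU) v hv).symm
    refine ⟨wAct w (sRefl β lam), fun α hα => ?_, ?_⟩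
    · have hαP := simple_mem_PhiI S I hI α hα
      rw [hagree _ (hcoU α (hPU hαP.1))]
      exact hmu'.2 α hαP
    · rw [sgnW_ne_zero_iff]
      refine ⟨fun α hα => ?_, fun α hα => ?_, w, hw, rfl⟩
      · rw [← hsU lam β hβU α (hPU hα)]; exact h1 α hα
      · rw [hagree α (hPU hα)]; exact h2 α hα
  · intro mu hmu h
    refine ⟨hLam mu hmu, hsgn mu h, ?_⟩
    rw [sgnW_ne_zero_iff] at h
    obtain ⟨h1, h2, w, hw, hm⟩ := h
    have hmuperp : ∀ v ∈ Uᗮ, mu v = lam v := by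
      intro v hv
      rw [hm, wAct_perp P U hPU w hw _ v hv, hsperp lam β hβU v hv]
    have hsub : PsiPP S P Q (restrictW Q lam) = {γ ∈ PsiPP S P (S.Φ : Set V) lam | γ ∈ U} := by
      ext γ
      constructor
      · rintro ⟨⟨⟨hγQ, hγpos⟩, hγP, hγint⟩, hγr⟩
        have hγU := ((hQmem γ).1 hγQ).2
        refine ⟨⟨⟨⟨hγQ.1, hγpos⟩, hγP, ?_⟩, fun α hα => ?_⟩, hγU⟩
        · rwa [(hspec lam).2.1 _ (hcoU γ hγU)] at hγint
        · rw [← hsU lam γ hγU α (hPU hα)]; exact hγr α hα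
      · rintro ⟨⟨⟨⟨hγΦ, hγpos⟩, hγP, hγint⟩, hγr⟩, hγU⟩
        refine ⟨⟨⟨(hQmem γ).2 ⟨hγΦ, hγU⟩, hγpos⟩, hγP, ?_⟩, fun α hα => ?_⟩
        · rwa [(hspec lam).2.1 _ (hcoU γ hγU)]
        · rw [hsU lam γ hγU α (hPU hα)]; exact hγr α hα
    unfold jc
    rw [hsub]
    -- both sums over all of `V`
    refine finsum_congr fun γ => ?_
    by_cases hγ : γ ∈ PsiPP S P (S.Φ : Set V) lam
    · by_cases hγU : γ ∈ U
      · have hγ' : γ ∈ {γ ∈ PsiPP S P (S.Φ : Set V) lam | γ ∈ U} := ⟨hγ, hγU⟩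
        rw [finsum_eq_if, if_pos hγ, finsum_eq_if, if_pos hγ']
        refine sgnW_eq S I hI _ _ _ _ (fun α hα => hsU lam γ hγU α (hPU hα))
          (fun α hα => (hspec mu).2.1 α (hPU hα)) ⟨?_, ?_⟩
        · rintro ⟨w', hw', hm'⟩
          exact ⟨w', hw', hwr lam mu γ hγU w' hw' hm'⟩
        · rintro ⟨w', hw', hm'⟩
          refine ⟨w', hw', ?_⟩
          apply hstar_ext U
          · intro v hv
            rw [← (hspec mu).2.1 v hv, hm']
            exact wAct_congr P U hPU w' hw' _ _ (hsU lam γ hγU) v hv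
          · intro v hv
            rw [hmuperp v hv, wAct_perp P U hPU w' hw' _ v hv, hsperp lam γ hγU v hv]
      · have hγ' : γ ∉ {γ ∈ PsiPP S P (S.Φ : Set V) lam | γ ∈ U} := fun h => hγU h.2
        rw [finsum_eq_if, if_pos hγ, finsum_eq_if, if_neg hγ']
        by_contra hne
        rw [← ne_eq, sgnW_ne_zero_iff] at hne
        obtain ⟨-, -, w', hw', hm'⟩ := hne
        apply hγU
        rw [← Submodule.orthogonal_orthogonal U, Submodule.mem_orthogonal]
        intro v hv
        have h5 := hmuperp v hv
        rw [hm', wAct_perp P U hPU w' hw' _ v hv, sRefl_apply, sub_eq_self, mul_eq_zero] at h5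
        obtain ⟨n, hn, hn2⟩ := hγ.1.2.2
        rw [hn2] at h5
        rw [real_inner_comm]
        rcases h5 with h5 | h5
        · exact absurd (by exact_mod_cast h5) hn.ne'
        · exact_mod_cast h5
    · have hγ' : γ ∉ {γ ∈ PsiPP S P (S.Φ : Set V) lam | γ ∈ U} := fun h => hγ h.1
      rw [finsum_eq_if, if_neg hγ, finsum_eq_if, if_neg hγ']

end JantzenGVM
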